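/- Let G = A₁ * ⋯ * Aₘ and G' = A₁' * ⋯ * Aₘ' be free products where every factor A_i and A_j' is freely indecomposable and not infinite cyclic, and let φ : G → G' be an isomorphism. Suppose that for each i there is a nontrivial subgroup H_i ≤ A_i with φ(H_i) ≤ A_{σ(i)}' for some function σ. Then σ is uniquely determined on indices with H_i ≠ 1, and for each such i, φ(A_i) ≤ A_{σ(i)}'. -/

import Mathlib

universe u

/-- A group `H` is *freely indecomposable* if it is nontrivial and not isomorphic to a free
product of two nontrivial groups. -/
def FreelyIndecomposable (H : Type u) [Group H] : Prop :=
  Nontrivial H ∧ ∀ (A B : Type u) [Group A] [Group B],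
    Nontrivial A → Nontrivial B → IsEmpty (H ≃* Monoid.Coprod A B)

namespace Monoid.CoprodI

section Cocycle

variable {ι : Type*} {A : ι → Type*} [∀ i, Group (A i)]

/-- A family of group cocycles on the factors of a free product, with values in a possibly
nonabelian group, extends to a cocycle on the free product. -/
theorem exists_cocycle {X Q : Type*} [Group Q] [MulAction (CoprodI A) X]
    (c : ∀ i, A i → X → Q)
    (hc : ∀ i a b x, c i (a * b) x = c i a ((of b : CoprodI A) • x) * c i b x) :
    ∃ C : CoprodI A → X → Q, (∀ i (a : A i) x, C (of a) x = c i a x) ∧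
      ∀ g h x, C (g * h) x = C g (h • x) * C h x := by
  have hc1 : ∀ i x, c i 1 x = 1 := fun i x => by simpa using hc i 1 1 x
  let act : ∀ i, A i →* Function.End (X × Q) := fun i =>
    { toFun := fun a p => ((of a : CoprodI A) • p.1, c i a p.1 * p.2)
      map_one' := funext fun p => by simp [hc1, Function.End.one_def]
      map_mul' := fun a b => by
        funext p
        change _ = ((of a : CoprodI A) • (of b : CoprodI A) • p.1,
          c i a ((of b : CoprodI A) • p.1) * (c i b p.1 * p.2))
        simp [hc, mul_smul, mul_assoc] }
  let Φ : CoprodI A →* Function.End (X × Q) := lift act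
  have hΦ1 : ∀ p, Φ 1 p = p := fun p => by rw [map_one]; rfl
  have hΦof : ∀ i (a : A i) p, Φ (of a) p = ((of a : CoprodI A) • p.1, c i a p.1 * p.2) :=
    fun i a p => by simp only [Φ, lift_of]; rfl
  have hΦmul : ∀ g h p, Φ (g * h) p = Φ g (Φ h p) := fun g h p => by rw [map_mul]; rfl
  have hΦ : ∀ g x q, Φ g (x, q) = (g • x, (Φ g (x, 1)).2 * q) := by
    intro g
    induction g using CoprodI.induction_on with
    | one => intro x q; simp [hΦ1]
    | of i a => intro x q; simp [hΦof]
    | mul g h hg hh =>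
      intro x q
      rw [hΦmul, hΦmul, hh x q, hh x 1, hg, hg _ ((Φ h (x, 1)).2 * 1)]
      simp [mul_smul, mul_assoc]
  refine ⟨fun g x => (Φ g (x, 1)).2, fun i a x => by simp [hΦof], fun g h x => ?_⟩
  change (Φ (g * h) (x, 1)).2 = _
  rw [hΦmul, hΦ h x 1, hΦ g]
  simp

end Cocycle

section FreeFactor

variable {ι : Type*} {A : ι → Type*} [∀ i, Group (A i)] (K : Subgroup (CoprodI A)) (j : ι)

/-- The orbit of the base point of `CoprodI A ⧸ K` under the `j`-th factor. -/
def factorOrbit : Set (CoprodI A ⧸ K) :=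
  {x | ∃ a : A j, ((of a : CoprodI A) : CoprodI A ⧸ K) = x}

variable {K j}

theorem of_smul_mem_factorOrbit_iff (a : A j) (x : CoprodI A ⧸ K) :
    (of a : CoprodI A) • x ∈ factorOrbit K j ↔ x ∈ factorOrbit K j := by
  constructor
  · rintro ⟨b, hb⟩
    refine ⟨a⁻¹ * b, ?_⟩
    rw [map_mul, map_inv, ← smul_eq_mul, ← MulAction.Quotient.smul_coe, hb, inv_smul_smul]
  · rintro ⟨b, rfl⟩
    exact ⟨a * b, by rw [map_mul]; rfl⟩

variable (K j) in
/-- Products of elements of the factors, read from right to left as paths from the base point in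
`CoprodI A ⧸ K`, which start with a chosen representative `s x` of a point of the orbit of the
`j`-th factor and afterwards never use the `j`-th factor at a point of this orbit. -/
inductive IsPath (s : CoprodI A ⧸ K → CoprodI A) : CoprodI A → Prop
  | base (x : CoprodI A ⧸ K) (hx : x ∈ factorOrbit K j) : IsPath s (s x)
  | step (i : ι) (a : A i) (g : CoprodI A)
      (h : ¬ (i = j ∧ (g : CoprodI A ⧸ K) ∈ factorOrbit K j)) (hg : IsPath s g) :
      IsPath s (of a * g)

theorem IsPath.exists_mk_eq {s : CoprodI A ⧸ K → CoprodI A}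
    (hs : ∀ x ∈ factorOrbit K j, (s x : CoprodI A ⧸ K) = x)
    (g : CoprodI A) {p : CoprodI A} (hp : IsPath K j s p) :
    ∃ q, IsPath K j s q ∧ (q : CoprodI A ⧸ K) = ((g * p : CoprodI A) : CoprodI A ⧸ K) := by
  induction g using CoprodI.induction_on generalizing p with
  | one => exact ⟨p, hp, by simp⟩
  | of i a =>
    by_cases h : i = j ∧ (p : CoprodI A ⧸ K) ∈ factorOrbit K j
    · obtain ⟨rfl, h⟩ := h
      have h' := (of_smul_mem_factorOrbit_iff a _).2 h
      exact ⟨_, .base _ h', hs _ h'⟩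
    · exact ⟨_, .step i a p h hp, rfl⟩
  | mul g h hg hh =>
    obtain ⟨q, hq, hq'⟩ := hh hp
    obtain ⟨r, hr, hr'⟩ := hg hq
    refine ⟨r, hr, ?_⟩
    rw [hr', mul_assoc, ← smul_eq_mul, ← MulAction.Quotient.smul_coe, hq']
    rfl

variable (K j) in
theorem exists_path_transversal :
    ∃ s t : CoprodI A ⧸ K → CoprodI A, (∀ x, (t x : CoprodI A ⧸ K) = x) ∧
      t ((1 : CoprodI A) : CoprodI A ⧸ K) = 1 ∧
      (∀ x ∈ factorOrbit K j, t x ∈ (of : A j →* CoprodI A).range ∧ t x = s x) ∧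
      ∀ x, IsPath K j s (t x) := by
  classical
  have h1 : ∀ x : CoprodI A ⧸ K, ∃ g : CoprodI A, x ∈ factorOrbit K j →
      g ∈ (of : A j →* CoprodI A).range ∧ (g : CoprodI A ⧸ K) = x ∧
      (x = ((1 : CoprodI A) : CoprodI A ⧸ K) → g = 1) := by
    intro x
    by_cases hx1 : x = ((1 : CoprodI A) : CoprodI A ⧸ K)
    · exact ⟨1, fun _ => ⟨one_mem _, hx1.symm, fun _ => rfl⟩⟩
    · by_cases hx : x ∈ factorOrbit K j
      · obtain ⟨a, ha⟩ := hx
        exact ⟨of a, fun _ => ⟨⟨a, rfl⟩, ha, fun h => absurd h hx1⟩⟩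
      · exact ⟨1, fun h => absurd h hx⟩
  choose s hs using h1
  have hbase : ((1 : CoprodI A) : CoprodI A ⧸ K) ∈ factorOrbit K j := ⟨1, by simp⟩
  have hs1 := (hs _ hbase).2.2 rfl
  have h2 : ∀ x : CoprodI A ⧸ K, ∃ g : CoprodI A, IsPath K j s g ∧ (g : CoprodI A ⧸ K) = x ∧
      (x ∈ factorOrbit K j → g = s x) := by
    intro x
    by_cases hx : x ∈ factorOrbit K j
    · exact ⟨s x, .base x hx, (hs x hx).2.1, fun _ => rfl⟩
    · obtain ⟨g, rfl⟩ := QuotientGroup.mk_surjective x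
      obtain ⟨q, hq, hq'⟩ := IsPath.exists_mk_eq (fun x hx => (hs x hx).2.1) g
        (IsPath.base (s := s) _ hbase)
      exact ⟨q, hq, by rw [hq', hs1, mul_one], fun h => absurd h hx⟩
  choose t ht using h2
  refine ⟨s, t, fun x => (ht x).2.1, by rw [(ht _).2.2 hbase, hs1], fun x hx => ?_,
    fun x => (ht x).1⟩
  rw [(ht x).2.2 hx]
  exact ⟨(hs x hx).1, rfl⟩

variable (K j) in
/-- A weak form of the Kurosh subgroup theorem: the intersection of a subgroup `K` of a free
product with one of the factors is a free factor of `K`. -/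
theorem exists_mulEquiv_coprod_inf_range :
    ∃ M : Subgroup (CoprodI A),
      ∃ e : K ≃* Monoid.Coprod ↥(K ⊓ (of : A j →* CoprodI A).range) M,
        ∀ q, (e.symm q : CoprodI A) =
          Monoid.Coprod.lift (K ⊓ (of : A j →* CoprodI A).range).subtype M.subtype q := by
  classical
  obtain ⟨s, t, ht, ht1, hts, hpath⟩ := exists_path_transversal K j
  let c₀ : CoprodI A → CoprodI A ⧸ K → CoprodI A := fun g x => (t (g • x))⁻¹ * g * t x
  have hc₀ : ∀ g h x, c₀ (g * h) x = c₀ g (h • x) * c₀ h x := fun g h x => by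
    simp only [c₀, mul_smul]; group
  have hc₀K : ∀ g x, c₀ g x ∈ K := fun g x => by
    have h : ((t (g • x) : CoprodI A) : CoprodI A ⧸ K) = ((g * t x : CoprodI A) : _) := by
      rw [ht, ← smul_eq_mul, ← MulAction.Quotient.smul_coe, ht]
    simpa [c₀, mul_assoc] using QuotientGroup.eq.1 h
  set L := K ⊓ (of : A j →* CoprodI A).range
  have hc₀L : ∀ (a : A j) (x), x ∈ factorOrbit K j → c₀ (of a) x ∈ L := fun a x hx =>
    ⟨hc₀K _ _, mul_mem (mul_mem ((of : A j →* CoprodI A).range.inv_mem (hts _ ((of_smul_mem_factorOrbit_iff a x).2 hx)).1)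
      ⟨a, rfl⟩) (hts x hx).1⟩
  let M : Subgroup (CoprodI A) := Subgroup.closure
    {g | ∃ i, ∃ a : A i, ∃ x, ¬ (i = j ∧ x ∈ factorOrbit K j) ∧ c₀ (of a) x = g}
  have hc₀M : ∀ (i) (a : A i) (x), ¬ (i = j ∧ x ∈ factorOrbit K j) → c₀ (of a) x ∈ M :=
    fun i a x h => Subgroup.subset_closure ⟨i, a, x, h, rfl⟩
  have hMK : M ≤ K := by
    refine (Subgroup.closure_le _).2 ?_
    rintro _ ⟨i, a, x, -, rfl⟩
    exact hc₀K _ _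
  let Q := Monoid.Coprod L M
  let c : ∀ i, A i → CoprodI A ⧸ K → Q := fun i a x =>
    if h : i = j ∧ x ∈ factorOrbit K j then
      Monoid.Coprod.inl ⟨c₀ (of a) x, by obtain ⟨rfl, h⟩ := h; exact hc₀L a x h⟩
    else Monoid.Coprod.inr ⟨c₀ (of a) x, hc₀M i a x h⟩
  have hcl : ∀ (a : A j) (x) (h : x ∈ factorOrbit K j),
      c j a x = Monoid.Coprod.inl ⟨c₀ (of a) x, hc₀L a x h⟩ := fun a x h => dif_pos ⟨rfl, h⟩
  have hcr : ∀ (i) (a : A i) (x) (h : ¬ (i = j ∧ x ∈ factorOrbit K j)),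
      c i a x = Monoid.Coprod.inr ⟨c₀ (of a) x, hc₀M i a x h⟩ := fun i a x h => dif_neg h
  have hc : ∀ i a b x, c i (a * b) x = c i a ((of b : CoprodI A) • x) * c i b x := by
    intro i a b x
    by_cases h : i = j ∧ x ∈ factorOrbit K j
    · obtain ⟨rfl, h⟩ := h
      rw [hcl _ _ h, hcl _ _ h, hcl _ _ ((of_smul_mem_factorOrbit_iff b x).2 h), ← map_mul]
      congr 1
      ext1
      simp [hc₀]
    · have h' : ¬ (i = j ∧ (of b : CoprodI A) • x ∈ factorOrbit K j) := by
        rintro ⟨rfl, h'⟩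
        exact h ⟨rfl, (of_smul_mem_factorOrbit_iff b x).1 h'⟩
      rw [hcr _ _ _ h, hcr _ _ _ h, hcr _ _ _ h', ← map_mul]
      congr 1
      ext1
      simp [hc₀]
  obtain ⟨C, hCof, hCmul⟩ := exists_cocycle c hc
  have hC1 : ∀ x, C 1 x = 1 := fun x => by simpa using hCmul 1 1 x
  let ψ : Q →* CoprodI A := Monoid.Coprod.lift L.subtype M.subtype
  have hψl : ∀ l : L, ψ (Monoid.Coprod.inl l) = l := fun l => Monoid.Coprod.lift_apply_inl _ _ l
  have hψr : ∀ m : M, ψ (Monoid.Coprod.inr m) = m := fun m => Monoid.Coprod.lift_apply_inr _ _ m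
  have hψC : ∀ g x, ψ (C g x) = c₀ g x := by
    intro g
    induction g using CoprodI.induction_on with
    | one => intro x; simp [hC1, c₀]
    | of i a =>
      intro x
      rw [hCof]
      by_cases h : i = j ∧ x ∈ factorOrbit K j
      · obtain ⟨rfl, h⟩ := h
        rw [hcl _ _ h, hψl]
      · rw [hcr _ _ _ h, hψr]
    | mul g h hg hh => intro x; rw [hCmul, map_mul, hg, hh, hc₀]
  let o : CoprodI A ⧸ K := ((1 : CoprodI A) : CoprodI A ⧸ K)
  have ho : ∀ g : CoprodI A, g • o = (g : CoprodI A ⧸ K) := fun g => by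
    rw [MulAction.Quotient.smul_coe, smul_eq_mul, mul_one]
  have hKo : ∀ g ∈ K, g • o = o := fun g hg => by
    rw [ho]; exact (QuotientGroup.eq.2 (by simpa using hg)).symm
  have hoO : o ∈ factorOrbit K j := ⟨1, by simp [o]⟩
  have hto : t o = 1 := ht1
  have hc₀k : ∀ g ∈ K, c₀ g o = g := fun g hg => by simp [c₀, hKo g hg, hto]
  have hc₀t : ∀ x, c₀ (t x) o = 1 := fun x => by simp [c₀, ho, ht, hto]
  have hCpath : ∀ g, IsPath K j s g → ∃ m : M, C g o = Monoid.Coprod.inr m := by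
    intro g hg
    induction hg with
    | base x hx =>
      refine ⟨1, ?_⟩
      rw [← (hts x hx).2]
      obtain ⟨a, ha⟩ := (hts x hx).1
      have h := hc₀t x
      rw [← ha] at h ⊢
      rw [hCof, hcl _ _ hoO, map_one, ← map_one (Monoid.Coprod.inl (M := L))]
      congr 1
      ext1
      exact h
    | step i a g h _ ih =>
      obtain ⟨m, hm⟩ := ih
      rw [hCmul, hm, ho, hCof, hcr _ _ _ h, ← map_mul]
      exact ⟨_, rfl⟩
  have hCt : ∀ x, C (t x) o = 1 := by
    intro x
    obtain ⟨m, hm⟩ := hCpath _ (hpath x)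
    have h := hψC (t x) o
    rw [hm, hc₀t, hψr] at h
    rw [hm, show m = 1 from Subtype.ext h, map_one]
  have hCc₀ : ∀ g x, C (c₀ g x) o = C g x := by
    intro g x
    have h1 : t (g • x) * c₀ g x = g * t x := by simp [c₀, mul_assoc]
    have h2 := congrArg (fun y => C y o) h1
    simp only [hCmul] at h2
    rwa [hKo _ (hc₀K g x), hCt, hCt, one_mul, mul_one, ho, ht] at h2
  let θ : K →* Q :=
    { toFun := fun k => C k o
      map_one' := hC1 o
      map_mul' := fun k l => by
        rw [Subgroup.coe_mul, hCmul, hKo _ l.2] }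
  have hψK : ∀ q, ψ q ∈ K := by
    intro q
    induction q using Monoid.Coprod.induction_on with
    | inl l => rw [hψl]; exact l.2.1
    | inr m => rw [hψr]; exact hMK m.2
    | mul p q hp hq => rw [map_mul]; exact mul_mem hp hq
  let ψK : Q →* K := ψ.codRestrict K hψK
  have h1 : ψK.comp θ = MonoidHom.id K := by
    ext k
    exact (hψC k o).trans (hc₀k k k.2)
  have h2 : θ.comp ψK = MonoidHom.id Q := by
    refine Monoid.Coprod.hom_ext ?_ ?_
    · ext l
      obtain ⟨_, hgK, a, rfl⟩ := l
      change C (ψ (Monoid.Coprod.inl _)) o = Monoid.Coprod.inl _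
      rw [hψl, hCof, hcl _ _ hoO]
      congr 1
      ext1
      exact hc₀k _ hgK
    · have key : ∀ g (hg : g ∈ M), θ ⟨g, hMK hg⟩ = Monoid.Coprod.inr ⟨g, hg⟩ := by
        intro g hg
        induction hg using Subgroup.closure_induction with
        | mem g hg =>
          obtain ⟨i, a, x, h, rfl⟩ := hg
          exact (hCc₀ _ _).trans ((hCof i a x).trans (hcr i a x h))
        | one => exact (hC1 o).trans (map_one _).symm
        | mul g h hg hh ihg ihh =>
          have := congrArg₂ (· * ·) ihg ihh
          rw [← map_mul, ← map_mul] at this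
          exact this
        | inv g hg ih =>
          have := congrArg (·⁻¹) ih
          rw [← map_inv, ← map_inv] at this
          exact this
      ext m
      have : ψK (Monoid.Coprod.inr m) = ⟨m, hMK m.2⟩ := Subtype.ext (hψr m)
      change θ (ψK (Monoid.Coprod.inr m)) = Monoid.Coprod.inr m
      rw [this, key]
  exact ⟨M, MonoidHom.toMulEquiv θ ψK h1 h2, fun q => rfl⟩

end FreeFactor

/-- A freely indecomposable subgroup of a free product that meets a factor nontrivially is
contained in this factor. -/
theorem le_range_of_freelyIndecomposable {ι : Type*} {A : ι → Type*} [∀ i, Group (A i)]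
    {K : Subgroup (CoprodI A)} (hK : FreelyIndecomposable K) {j : ι}
    (h : K ⊓ (of : A j →* CoprodI A).range ≠ ⊥) : K ≤ (of : A j →* CoprodI A).range := by
  obtain ⟨M, e, he⟩ := exists_mulEquiv_coprod_inf_range K j
  have hM : M = ⊥ := by
    by_contra hM
    exact (hK.2 _ _ ((Subgroup.nontrivial_iff_ne_bot _).2 h)
      ((Subgroup.nontrivial_iff_ne_bot _).2 hM)).false e
  intro k hk
  have h1 := he (e ⟨k, hk⟩)
  rw [e.symm_apply_apply] at h1
  change k = _ at h1
  rw [h1]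
  generalize e ⟨k, hk⟩ = q
  induction q using Monoid.Coprod.induction_on with
  | inl l => rw [Monoid.Coprod.lift_apply_inl]; exact l.2.2
  | inr m =>
    have hm : (m : CoprodI A) = 1 := by simpa only [hM, Subgroup.mem_bot] using m.2
    rw [Monoid.Coprod.lift_apply_inr, Subgroup.subtype_apply, hm]
    exact one_mem _
  | mul p q hp hq => rw [map_mul]; exact mul_mem hp hq

/-- Distinct factors of a free product intersect trivially. -/
theorem disjoint_range_of {ι : Type*} {A : ι → Type*} [∀ i, Group (A i)] {i j : ι} (hij : i ≠ j) :
    Disjoint (of : A i →* CoprodI A).range (of : A j →* CoprodI A).range := by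
  classical
  rw [disjoint_iff_inf_le]
  rintro _ ⟨⟨a, rfl⟩, b, hb⟩
  have h := congrArg (lift (Pi.mulSingle i (MonoidHom.id (A i)))) hb
  rw [lift_of, lift_of, Pi.mulSingle_eq_same, Pi.mulSingle_eq_of_ne hij.symm] at h
  have : a = 1 := h.symm
  rw [this]
  simp

end Monoid.CoprodI

/-- Free indecomposability is invariant under isomorphism. -/
theorem FreelyIndecomposable.of_mulEquiv {G H : Type u} [Group G] [Group H]
    (hG : FreelyIndecomposable G) (e : G ≃* H) : FreelyIndecomposable H :=
  have := hG.1
  ⟨e.symm.toEquiv.nontrivial, fun A B _ _ hA hB =>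
    ⟨fun f => (hG.2 A B hA hB).false (e.trans f)⟩⟩

/-- Let `G = A₁ * ⋯ * Aₘ` and `G' = A₁' * ⋯ * Aₘ'` be free products in which
every factor is freely indecomposable and not infinite cyclic, and let `φ : G → G'` be an
isomorphism.  Suppose that for each `i` there is a nontrivial subgroup `H i ≤ A i` with
`φ(H i) ≤ A' (σ i)` for some function `σ`.  Then `σ` is uniquely determined (here all `H i` are
nontrivial), and for each `i`, `φ(A i) ≤ A' (σ i)`. -/
theorem stmt8 {m : ℕ} {A A' : Fin m → Type u}
    [∀ i, Group (A i)] [∀ i, Group (A' i)]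
    (hA : ∀ i, FreelyIndecomposable (A i) ∧ IsEmpty (A i ≃* Multiplicative ℤ))
    (hA' : ∀ i, FreelyIndecomposable (A' i) ∧ IsEmpty (A' i ≃* Multiplicative ℤ))
    (φ : Monoid.CoprodI A ≃* Monoid.CoprodI A')
    (H : ∀ i, Subgroup (A i)) (hH : ∀ i, H i ≠ ⊥)
    (σ : Fin m → Fin m)
    (hσ : ∀ i, Subgroup.map φ.toMonoidHom
        (Subgroup.map (Monoid.CoprodI.of : A i →* Monoid.CoprodI A) (H i)) ≤
        (Monoid.CoprodI.of : A' (σ i) →* Monoid.CoprodI A').range) :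
    (∀ σ' : Fin m → Fin m,
      (∀ i, Subgroup.map φ.toMonoidHom
          (Subgroup.map (Monoid.CoprodI.of : A i →* Monoid.CoprodI A) (H i)) ≤
          (Monoid.CoprodI.of : A' (σ' i) →* Monoid.CoprodI A').range) → σ' = σ) ∧
    (∀ i, Subgroup.map φ.toMonoidHom
        (Monoid.CoprodI.of : A i →* Monoid.CoprodI A).range ≤
        (Monoid.CoprodI.of : A' (σ i) →* Monoid.CoprodI A').range) := by
  have hne : ∀ i, Subgroup.map φ.toMonoidHom
      (Subgroup.map (Monoid.CoprodI.of : A i →* Monoid.CoprodI A) (H i)) ≠ ⊥ := by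
    intro i h
    rw [Subgroup.map_eq_bot_iff_of_injective _ φ.injective,
      Subgroup.map_eq_bot_iff_of_injective _ (Monoid.CoprodI.of_injective i)] at h
    exact hH i h
  refine ⟨fun σ' hσ' => funext fun i => ?_, fun i => ?_⟩
  · by_contra hij
    exact hne i (le_bot_iff.1 (Monoid.CoprodI.disjoint_range_of hij (hσ' i) (hσ i)))
  · let f : A i →* Monoid.CoprodI A' := φ.toMonoidHom.comp Monoid.CoprodI.of
    have hf : Function.Injective f := φ.injective.comp (Monoid.CoprodI.of_injective i)
    rw [← MonoidHom.range_comp]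
    refine Monoid.CoprodI.le_range_of_freelyIndecomposable
      ((hA i).1.of_mulEquiv (MonoidHom.ofInjective hf)) fun h => hne i ?_
    rw [← le_bot_iff, ← h]
    refine le_inf ?_ (hσ i)
    rw [MonoidHom.range_comp]
    exact Subgroup.map_mono (Subgroup.map_le_range _ _)
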